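/- arXiv:2006.16569 — 3 statements merged into one kernel-verified Lean document; each statement's English description precedes it below -/
import Mathlib

section
/- For all real numbers v, λ, μ with 0 ≤ v ≤ λ < μ < 1, the Bernoulli Kullback–Leibler divergence satisfies kl(v, μ) − kl(v, λ) ≥ (μ − λ)²/2. -/
/-!
For `v ∈ [0, λ]`, the difference `kl(v,μ) − kl(v,λ) = v log(λ/μ) + (1−v) log((1−λ)/(1−μ))` is
affine and decreasing in `v`, because `log(λ/μ) ≤ 0 ≤ log((1−λ)/(1−μ))`. Hence it is at least its
value at `v = λ`, which is `kl(λ,μ)`. From `log x ≤ x − 1` at `x = √(q/p)` (`mul_log_div_ge`)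
this is at least the squared Hellinger distance `(√λ−√μ)² + (√(1−λ)−√(1−μ))²`. Each of the two
terms is at least `(μ−λ)²/4` since `p − q = (√p−√q)(√p+√q)` with `0 ≤ √p+√q ≤ 2`
(`sq_sub_le_sqrt`).
-/

/-- Bernoulli Kullback–Leibler divergence
`kl(p,q) = p·log(p/q) + (1−p)·log((1−p)/(1−q))`,
with the convention `0·log 0 = 0` (automatic since `Real.log 0 = 0`). -/
noncomputable def klBern (p q : ℝ) : ℝ :=
  p * Real.log (p / q) + (1 - p) * Real.log ((1 - p) / (1 - q))

theorem mul_log_div_ge {p q : ℝ} (hp : 0 ≤ p) (hq : 0 < q) :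
    2 * (p - √p * √q) ≤ p * Real.log (p / q) := by
  rcases hp.eq_or_lt with rfl | hp
  · simp
  have ha : 0 < √p := Real.sqrt_pos.2 hp
  have hb : 0 < √q := Real.sqrt_pos.2 hq
  have h1 := Real.log_le_sub_one_of_pos (div_pos hb ha)
  rw [Real.log_div hb.ne' ha.ne', Real.log_sqrt hq.le, Real.log_sqrt hp.le] at h1
  rw [Real.log_div hp.ne' hq.ne']
  have h2 := mul_le_mul_of_nonneg_left h1 hp.le
  have h3 : p * (√q / √p - 1) = √p * √q - p := by
    have h4 : p * (√q / √p) = √p * √q := by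
      rw [← mul_div_assoc, div_eq_iff ha.ne']
      linear_combination (-√q) * Real.mul_self_sqrt hp.le
    linear_combination h4
  linarith

theorem sq_sub_le_sqrt {p q : ℝ} (hp : 0 ≤ p) (hq : 0 ≤ q) (hp1 : p ≤ 1) (hq1 : q ≤ 1) :
    (p - q) ^ 2 / 4 ≤ p + q - 2 * (√p * √q) := by
  have ha := Real.sqrt_nonneg p
  have hb := Real.sqrt_nonneg q
  have ha1 : √p ≤ 1 := Real.sqrt_le_one.2 hp1
  have hb1 : √q ≤ 1 := Real.sqrt_le_one.2 hq1
  have h1 : (√p + √q) ^ 2 ≤ 4 := by nlinarith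
  have h2 := mul_le_mul_of_nonneg_left h1 (sq_nonneg (√p - √q))
  have h3 : p - q = (√p - √q) * (√p + √q) := by
    linear_combination Real.mul_self_sqrt hq - Real.mul_self_sqrt hp
  have h4 : p + q - 2 * (√p * √q) = (√p - √q) ^ 2 := by
    linear_combination - Real.mul_self_sqrt hq - Real.mul_self_sqrt hp
  rw [h4, h3, mul_pow]
  linarith

/-- For `v ≠ 0` the point `λ` is positive; for `v = 0` both sides vanish, even if `λ = 0`. -/
theorem mul_log_div_sub {v l m : ℝ} (hv : 0 ≤ v) (hl : v ≤ l) (hm : l < m) :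
    v * Real.log (v / m) - v * Real.log (v / l) = v * Real.log (l / m) := by
  rcases hv.eq_or_lt with rfl | hv
  · simp
  have hl0 : 0 < l := by linarith
  have hm0 : 0 < m := by linarith
  rw [Real.log_div hv.ne' hm0.ne', Real.log_div hv.ne' hl0.ne', Real.log_div hl0.ne' hm0.ne']
  ring

/-- For `0 ≤ v ≤ λ < μ < 1`, one has `kl(v,μ) − kl(v,λ) ≥ (μ − λ)²/2`. -/
theorem kl_sub_kl_ge (v lam mu : ℝ) (hv : 0 ≤ v) (hvlam : v ≤ lam)
    (hlammu : lam < mu) (hmu : mu < 1) :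
    klBern v mu - klBern v lam ≥ (mu - lam) ^ 2 / 2 := by
  have hl0 : 0 ≤ lam := hv.trans hvlam
  have hm0 : 0 < mu := by linarith
  have hv1 : 0 < 1 - v := by linarith
  have hl1 : 0 < 1 - lam := by linarith
  have hm1 : 0 < 1 - mu := by linarith
  have e1 := mul_log_div_sub hv hvlam hlammu
  have e2 : (1 - v) * Real.log ((1 - v) / (1 - mu)) - (1 - v) * Real.log ((1 - v) / (1 - lam))
      = (1 - v) * Real.log ((1 - lam) / (1 - mu)) := by
    rw [Real.log_div hv1.ne' hm1.ne', Real.log_div hv1.ne' hl1.ne', Real.log_div hl1.ne' hm1.ne']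
    ring
  have n1 : Real.log (lam / mu) ≤ 0 :=
    Real.log_nonpos (by positivity) ((div_le_one hm0).2 hlammu.le)
  have n2 : 0 ≤ Real.log ((1 - lam) / (1 - mu)) :=
    Real.log_nonneg ((one_le_div hm1).2 (by linarith))
  have m1 := mul_le_mul_of_nonpos_right hvlam n1
  have m2 := mul_le_mul_of_nonneg_right (show 1 - lam ≤ 1 - v by linarith) n2
  have k1 := mul_log_div_ge hl0 hm0
  have k2 := mul_log_div_ge hl1.le hm1
  have s1 := sq_sub_le_sqrt hl0 hm0.le (by linarith) hmu.le
  have s2 := sq_sub_le_sqrt hl1.le hm1.le (by linarith) (by linarith)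
  unfold klBern
  nlinarith
end

section
/- For all real numbers μ, μ', μ'' with 0 ≤ μ ≤ μ' ≤ μ'' < 1 and every u ∈ [μ'', 1), one has kl(μ', μ'')·kl(μ, u) ≤ kl(μ, μ'')·kl(μ', u); equivalently, whenever kl(μ', u) > 0 and kl(μ', μ'') > 0, the ratio kl(μ, u)/kl(μ', u) is at most kl(μ, μ'')/kl(μ', μ''). -/
/-- As a function of `p`, the divergence is minus the (concave) binary entropy plus an affine
function. -/
lemma klBern_eq_neg_binEntropy (p q : ℝ) (hq0 : 0 < q) (hq1 : q < 1) :
    klBern p q = -Real.binEntropy p - p * Real.log q - (1 - p) * Real.log (1 - q) := by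
  have h1q : 1 - q ≠ 0 := by linarith
  have key : ∀ x y : ℝ, y ≠ 0 → x * Real.log (x / y) = x * Real.log x - x * Real.log y := by
    intro x y hy
    rcases eq_or_ne x 0 with rfl | hx
    · simp
    · rw [Real.log_div hx hy]; ring
  rw [klBern, key p q hq0.ne', key (1 - p) (1 - q) h1q, Real.binEntropy, Real.log_inv,
    Real.log_inv]
  ring

lemma klBern_self (q : ℝ) (hq0 : 0 < q) (hq1 : q < 1) : klBern q q = 0 := by
  have h1q : 1 - q ≠ 0 := by linarith
  simp [klBern, div_self hq0.ne', div_self h1q]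

lemma klBern_nonneg (p q : ℝ) (hp0 : 0 ≤ p) (hp1 : p ≤ 1) (hq0 : 0 < q) (hq1 : q < 1) :
    0 ≤ klBern p q := by
  have key : ∀ x y : ℝ, 0 ≤ x → 0 < y → x - y ≤ x * Real.log (x / y) := by
    intro x y hx hy
    rcases hx.eq_or_lt with rfl | hx
    · simp [hy.le]
    · have h := Real.one_sub_inv_le_log_of_pos (div_pos hx hy)
      have h' := mul_le_mul_of_nonneg_left h hx.le
      have e : x * (1 - (x / y)⁻¹) = x - y := by field_simp
      linarith
  have h1 := key p q hp0 hq0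
  have h2 := key (1 - p) (1 - q) (by linarith) (by linarith)
  unfold klBern
  linarith

lemma klBern_three_point (p c u : ℝ) (hc0 : 0 < c) (hc1 : c < 1) (hu0 : 0 < u) (hu1 : u < 1) :
    klBern p u = klBern p c + klBern c u +
      (c - p) * (Real.log u - Real.log c + (Real.log (1 - c) - Real.log (1 - u))) := by
  have h := klBern_self c hc0 hc1
  rw [klBern_eq_neg_binEntropy _ _ hc0 hc1] at h
  rw [klBern_eq_neg_binEntropy p u hu0 hu1, klBern_eq_neg_binEntropy p c hc0 hc1,
    klBern_eq_neg_binEntropy c u hu0 hu1]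
  linear_combination -h

/-- Convexity of `p ↦ kl(p,c)`, applied to the chord from `a` to the zero at `c`. -/
lemma klBern_chord (a b c : ℝ) (ha : 0 ≤ a) (hab : a ≤ b) (hbc : b ≤ c) (hac : a < c)
    (hc1 : c < 1) : (c - a) * klBern b c ≤ (c - b) * klBern a c := by
  have hc0 : 0 < c := by linarith
  have hd : 0 < c - a := by linarith
  have h := klBern_self c hc0 hc1
  have hw1 : 0 ≤ (c - b) / (c - a) := div_nonneg (by linarith) hd.le
  have hw2 : 0 ≤ (b - a) / (c - a) := div_nonneg (by linarith) hd.le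
  have hw : (c - b) / (c - a) + (b - a) / (c - a) = 1 := by field_simp; ring
  have ham : a ∈ Set.Icc (0 : ℝ) 1 := ⟨ha, by linarith⟩
  have hcm : c ∈ Set.Icc (0 : ℝ) 1 := ⟨hc0.le, hc1.le⟩
  have hconc := Real.strictConcave_binEntropy.concaveOn.2 ham hcm hw1 hw2 hw
  have hb : (c - b) / (c - a) * a + (b - a) / (c - a) * c = b := by field_simp; ring
  simp only [smul_eq_mul] at hconc
  rw [hb] at hconc
  have h' := mul_le_mul_of_nonneg_left hconc hd.le
  have e : (c - a) * ((c - b) / (c - a) * Real.binEntropy a +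
      (b - a) / (c - a) * Real.binEntropy c) =
      (c - b) * Real.binEntropy a + (b - a) * Real.binEntropy c := by
    field_simp
  rw [e] at h'
  rw [klBern_eq_neg_binEntropy _ _ hc0 hc1] at h ⊢
  rw [klBern_eq_neg_binEntropy _ _ hc0 hc1]
  linear_combination h' + (b - a) * h

lemma klBern_cross (a b c u : ℝ) (ha : 0 ≤ a) (hab : a ≤ b) (hbc : b ≤ c) (hcu : c ≤ u)
    (hu1 : u < 1) : klBern b c * klBern a u ≤ klBern a c * klBern b u := by
  rcases (hab.trans hbc).eq_or_lt with hac | hac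
  -- This case contains `c = 0`, where the formulas for `kl(·,c)` above do not apply.
  · obtain rfl : a = b := le_antisymm hab (by linarith)
    exact le_rfl
  have hc0 : 0 < c := by linarith
  have hc1 : c < 1 := by linarith
  have hu0 : 0 < u := by linarith
  have hchord := klBern_chord a b c ha hab hbc hac hc1
  have hmono : klBern b c ≤ klBern a c := by
    have h := klBern_nonneg a c ha (by linarith) hc0 hc1
    have h' : (c - a) * klBern b c ≤ (c - a) * klBern a c :=
      hchord.trans (mul_le_mul_of_nonneg_right (by linarith) h)
    exact le_of_mul_le_mul_left h' (by linarith)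
  have hD := klBern_nonneg c u hc0.le hc1.le hu0 hu1
  have hS1 : Real.log c ≤ Real.log u := Real.log_le_log hc0 hcu
  have hS2 : Real.log (1 - u) ≤ Real.log (1 - c) :=
    Real.log_le_log (by linarith) (by linarith)
  have hS : 0 ≤ Real.log u - Real.log c + (Real.log (1 - c) - Real.log (1 - u)) := by linarith
  rw [klBern_three_point a c u hc0 hc1 hu0 hu1, klBern_three_point b c u hc0 hc1 hu0 hu1]
  linear_combination mul_le_mul_of_nonneg_right hmono hD + mul_le_mul_of_nonneg_right hchord hS

/-- For `0 ≤ μ ≤ μ' ≤ μ'' < 1` and `u ∈ [μ'', 1)`,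
`kl(μ',μ'')·kl(μ,u) ≤ kl(μ,μ'')·kl(μ',u)`; equivalently, the ratio
`kl(μ,u)/kl(μ',u)` is at most `kl(μ,μ'')/kl(μ',μ'')` whenever the
denominators are positive. -/
theorem kl_ratio_mono (mu mu' mu'' u : ℝ) (h0 : 0 ≤ mu) (h1 : mu ≤ mu')
    (h2 : mu' ≤ mu'') (h3 : mu'' < 1) (hu : u ∈ Set.Ico mu'' 1) :
    klBern mu' mu'' * klBern mu u ≤ klBern mu mu'' * klBern mu' u ∧
      (0 < klBern mu' u → 0 < klBern mu' mu'' →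
        klBern mu u / klBern mu' u ≤ klBern mu mu'' / klBern mu' mu'') := by
  have h := klBern_cross mu mu' mu'' u h0 h1 h2 hu.1 hu.2
  refine ⟨h, fun hp hq => ?_⟩
  rw [div_le_div_iff₀ hp hq]
  linarith
end

section
/- (Deterministic content of the d-IMED-UB second-order empirical bounds.) Let S' and S be finite nonempty sets and let N : S' ∪ S → ℕ with N(a) ≥ 1 for all a. Let D : S' → [0, ∞) with some a⋆ ∈ S' satisfying D(a⋆) = 0, and let a' ∈ S' be a minimizer over S' of the index I(a) = N(a)·D(a) + log N(a). Let K : S → [0, ∞) with a' ∈ S and K(a') = 0, and let b ∈ S be a minimizer over S of the second-order index J(a) = N(a)·K(a) + log N(a). Then: (i) N(b) ≤ N(a') ≤ N(a⋆); (ii) N(a')·D(a') ≤ log N(a⋆); and (iii) if D(a') > 0, then N(b)·K(b) ≤ log( log N(a⋆) / D(a') ). -/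
/-!
Comparing the minimal index with that of an arm of zero divergence, whose index is just the
logarithm of its number of pulls, gives `I(a') ≤ log N(a⋆)` and `J(b) ≤ log N(a')`. Each index is
a sum of two nonnegative terms, so each term obeys the same bound. The third bound follows by
inserting `N(a') ≤ log N(a⋆) / D(a')`, a rearrangement of the second, into
`N(b)·K(b) ≤ log N(a')`.
-/

/-- Deterministic content of the d-IMED-UB second-order empirical bounds.
`S'` and `S` are finite nonempty sets of arms within an ambient type `A`,
`N a ≥ 1` is the number of pulls of every arm `a ∈ S' ∪ S`,
`D : S' → [0,∞)` vanishes at `a⋆ ∈ S'`, `a'` minimizes the index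
`I(a) = N(a)·D(a) + log N(a)` over `S'`, `K : S → [0,∞)` vanishes at
`a' ∈ S`, and `b` minimizes the second-order index
`J(a) = N(a)·K(a) + log N(a)` over `S`. Then
(i) `N(b) ≤ N(a') ≤ N(a⋆)`; (ii) `N(a')·D(a') ≤ log N(a⋆)`; and
(iii) if `D(a') > 0` then `N(b)·K(b) ≤ log(log N(a⋆) / D(a'))`. -/
theorem dimed_second_order_bounds {A : Type*} [DecidableEq A] (S' S : Finset A)
    (hS' : S'.Nonempty) (hS : S.Nonempty)
    (N : A → ℕ) (hN : ∀ a ∈ S' ∪ S, 1 ≤ N a)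
    (D : A → ℝ) (hD : ∀ a ∈ S', 0 ≤ D a)
    (astar : A) (hastar : astar ∈ S') (hDstar : D astar = 0)
    (a' : A) (ha'S' : a' ∈ S')
    (ha'min : ∀ a ∈ S', (N a' : ℝ) * D a' + Real.log (N a') ≤
      (N a : ℝ) * D a + Real.log (N a))
    (K : A → ℝ) (hK : ∀ a ∈ S, 0 ≤ K a)
    (ha'S : a' ∈ S) (hKa' : K a' = 0)
    (b : A) (hbS : b ∈ S)
    (hbmin : ∀ a ∈ S, (N b : ℝ) * K b + Real.log (N b) ≤
      (N a : ℝ) * K a + Real.log (N a)) :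
    (N b ≤ N a' ∧ N a' ≤ N astar) ∧
      (N a' : ℝ) * D a' ≤ Real.log (N astar) ∧
      (0 < D a' → (N b : ℝ) * K b ≤
        Real.log (Real.log (N astar) / D a')) := by
  have hNa' : (1 : ℝ) ≤ N a' := by exact_mod_cast hN a' (Finset.mem_union_left _ ha'S')
  have hNs : (1 : ℝ) ≤ N astar := by exact_mod_cast hN astar (Finset.mem_union_left _ hastar)
  have hNb : (1 : ℝ) ≤ N b := by exact_mod_cast hN b (Finset.mem_union_right _ hbS)
  have hI := ha'min astar hastar
  have hJ := hbmin a' ha'S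
  rw [hDstar, mul_zero, zero_add] at hI
  rw [hKa', mul_zero, zero_add] at hJ
  have hDN : 0 ≤ (N a' : ℝ) * D a' := mul_nonneg (by linarith) (hD a' ha'S')
  have hKN : 0 ≤ (N b : ℝ) * K b := mul_nonneg (by linarith) (hK b hbS)
  have hlog_a' := Real.log_nonneg hNa'
  have hlog_b := Real.log_nonneg hNb
  have h_two : (N a' : ℝ) * D a' ≤ Real.log (N astar) := by linarith
  refine ⟨⟨?_, ?_⟩, h_two, fun hpos => ?_⟩
  · exact_mod_cast (Real.log_le_log_iff (by linarith) (by linarith)).1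
      (show Real.log (N b) ≤ Real.log (N a') by linarith)
  · exact_mod_cast (Real.log_le_log_iff (by linarith) (by linarith)).1
      (show Real.log (N a') ≤ Real.log (N astar) by linarith)
  · calc (N b : ℝ) * K b ≤ Real.log (N a') := by linarith
      _ ≤ Real.log (Real.log (N astar) / D a') :=
        Real.log_le_log (by linarith) ((le_div_iff₀ hpos).2 h_two)
end
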